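/- Suppose γ ≥ h. Then lim_{α↓0} α^h·E(α) = ψ, where ψ = [∫_0^∞ x·exp{c·μ·x·𝟙{γ = h} − μ·F^{(k)}(0)·x^{k+1}/(k+1)!} dx] / [∫_0^∞ exp{c·μ·x·𝟙{γ = h} − μ·F^{(k)}(0)·x^{k+1}/(k+1)!} dx]. In particular ψ depends on F only through the first nonzero derivative F^{(k)}(0). -/

import Mathlib

open Filter Set Topology MeasureTheory

open scoped Classical

/-- `J(α) = ∫_0^∞ exp{λ(α) ∫_0^x F̄(α u) du - μ x} dx` for the `M/M/1+GI` queue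
with `ρ(α) = 1 + c α^γ`, `λ(α) = ρ(α) μ`, patience CDF `x ↦ F(α x)`. -/
noncomputable def Jq (F : ℝ → ℝ) (μ c γ α : ℝ) : ℝ :=
  ∫ x in Set.Ioi (0 : ℝ),
    Real.exp ((1 + c * α ^ γ) * μ * (∫ u in (0 : ℝ)..x, (1 - F (α * u))) - μ * x)

/-- `J₁(α) = ∫_0^∞ x exp{λ(α) ∫_0^x F̄(α u) du - μ x} dx`. -/
noncomputable def J1q (F : ℝ → ℝ) (μ c γ α : ℝ) : ℝ :=
  ∫ x in Set.Ioi (0 : ℝ),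
    x * Real.exp ((1 + c * α ^ γ) * μ * (∫ u in (0 : ℝ)..x, (1 - F (α * u))) - μ * x)

/-- Exact mean steady-state virtual waiting time `E(α) = λ(α) J₁(α) / (1 + λ(α) J(α))`
in the `M/M/1+GI` model. -/
noncomputable def Emean (F : ℝ → ℝ) (μ c γ α : ℝ) : ℝ :=
  (1 + c * α ^ γ) * μ * J1q F μ c γ α / (1 + (1 + c * α ^ γ) * μ * Jq F μ c γ α)

/-!
Since `F` is nondecreasing, the log-density `(λ - μ) x - λ ∫_0^x F(α u) du` of the workload is
concave. On the scale `x = y / α ^ h` with `h = k / (k + 1)` both contributions are of order one,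
because `α = α ^ h * z` with `z = α ^ (1 / (k + 1))` and `z ^ k = α ^ h`: the log-densities
converge pointwise to `c μ 𝟙{γ = h} y - μ F^{(k)}(0) y ^ (k + 1) / (k + 1)!`. Concavity upgrades
pointwise convergence to domination by a single exponential, since a concave function lies below
the extensions of its chords. Hence the integrals converge, and the atom of the workload at `0` is
negligible on the scale `α ^ (-h)`.
-/

section LogConcave

lemma concaveOn_integral_of_antitone {f : ℝ → ℝ} (hf : Antitone f) (a : ℝ) :
    ConcaveOn ℝ univ fun x => ∫ u in a..x, f u := by
  have hi : ∀ x y, IntervalIntegrable f volume x y := fun _ _ => hf.intervalIntegrable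
  refine concaveOn_of_slope_anti_adjacent convex_univ fun {x y z} _ _ hxy hyz => ?_
  rw [intervalIntegral.integral_interval_sub_left (hi _ _) (hi _ _),
    intervalIntegral.integral_interval_sub_left (hi _ _) (hi _ _)]
  have hright : ∫ u in y..z, f u ≤ f y * (z - y) := by
    simpa [mul_comm] using intervalIntegral.integral_mono_on hyz.le (hi y z)
      (_root_.intervalIntegrable_const (c := f y)) fun u hu => hf hu.1
  have hleft : f y * (y - x) ≤ ∫ u in x..y, f u := by
    simpa [mul_comm] using intervalIntegral.integral_mono_on hxy.le
      (_root_.intervalIntegrable_const (c := f y)) (hi x y) fun u hu => hf hu.2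
  exact ((div_le_iff₀ (sub_pos.mpr hyz)).mpr hright).trans
    ((le_div_iff₀ (sub_pos.mpr hxy)).mpr hleft)

lemma concaveOn_of_tendsto {ι E : Type*} [AddCommMonoid E] [Module ℝ E] {l : Filter ι} [l.NeBot]
    {s : Set E} {V : ι → E → ℝ} {W : E → ℝ} (hV : ∀ᶠ i in l, ConcaveOn ℝ s (V i))
    (hlim : ∀ x ∈ s, Tendsto (fun i => V i x) l (𝓝 (W x))) : ConcaveOn ℝ s W := by
  have hs : Convex ℝ s := hV.exists.choose_spec.1
  refine ⟨hs, fun x hx y hy a b ha hb hab => ?_⟩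
  refine le_of_tendsto_of_tendsto (((hlim x hx).const_smul a).add ((hlim y hy).const_smul b))
    (hlim _ (hs hx hy ha hb hab)) ?_
  filter_upwards [hV] with i hi using hi.2 hx hy ha hb hab

lemma le_add_slope_mul_of_concaveOn {s : Set ℝ} {V : ℝ → ℝ} (hV : ConcaveOn ℝ s V) {x b y : ℝ}
    (hx : x ∈ s) (hy : y ∈ s) (hxb : x ≠ b) (hb : b ∈ uIcc x y) :
    V y ≤ V b + slope V b x * (y - b) := by
  rcases eq_or_ne y b with rfl | hyb
  · simp
  have hanti := hV.slope_anti (hV.1.ordConnected.uIcc_subset hx hy hb)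
  have hVy : (y - b) * slope V b y = V y - V b := sub_smul_slope V b y
  rcases mem_uIcc.mp hb with ⟨hxb', hby⟩ | ⟨hyb', hbx⟩
  · nlinarith [hanti ⟨hx, hxb⟩ ⟨hy, hyb⟩ (hxb'.trans hby)]
  · nlinarith [hanti ⟨hy, hyb⟩ ⟨hx, hxb⟩ (hyb'.trans hbx)]

variable {ι : Type*} {l : Filter ι} {V : ι → ℝ → ℝ} {W : ℝ → ℝ}

lemma exists_eventually_le_sub_mul_of_concaveOn
    (hV : ∀ᶠ i in l, ConcaveOn ℝ (Ioi 0) (V i))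
    (hlim : ∀ y, 0 < y → Tendsto (fun i => V i y) l (𝓝 (W y)))
    {a b : ℝ} (ha : 0 < a) (hab : a < b) (hW : W b < W a) :
    ∃ C δ : ℝ, 0 < δ ∧ ∀ᶠ i in l, ∀ y, 0 < y → V i y ≤ C - δ * y := by
  have hb : 0 < b := ha.trans hab
  have hslope : ∀ x, 0 < x → Tendsto (fun i => slope (V i) b x) l (𝓝 (slope W b x)) := fun x hx =>
    ((hlim x hx).sub (hlim b hb)).const_smul (x - b)⁻¹
  obtain ⟨δ, hδ, hδW⟩ : ∃ δ : ℝ, 0 < δ ∧ slope W b a < -δ := by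
    have hneg : slope W b a < 0 := by
      rw [slope_comm, slope_def_field]
      exact div_neg_of_neg_of_pos (sub_neg.mpr hW) (sub_pos.mpr hab)
    exact ⟨-slope W b a / 2, by linarith, by linarith⟩
  let t := |slope W b (b + 1) - 1|
  refine ⟨W b + 1 + t * b + δ * b, δ, hδ, ?_⟩
  filter_upwards [hV, (hlim b hb).eventually_lt_const (lt_add_one _),
    (hslope a ha).eventually_lt_const hδW,
    (hslope (b + 1) (by positivity)).eventually_const_lt (sub_one_lt _)]
    with i hVi hVb hleft hright y hy
  have htb : 0 ≤ t * b := by positivity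
  -- The chord over `[b, b + 1]` bounds `V i` on `(0, b]`, the one over `[a, b]` gives the decay.
  rcases le_total y b with hyb | hby
  · have hchord := le_add_slope_mul_of_concaveOn hVi (mem_Ioi.mpr (by positivity)) hy
      (lt_add_one b).ne' (mem_uIcc.mpr (Or.inr ⟨hyb, (lt_add_one b).le⟩))
    have hslope_mul : slope (V i) b (b + 1) * (y - b) ≤ t * (b - y) := by
      nlinarith [neg_abs_le (slope W b (b + 1) - 1)]
    nlinarith [mul_nonneg (abs_nonneg (slope W b (b + 1) - 1)) hy.le]
  · have hchord := le_add_slope_mul_of_concaveOn hVi ha hy hab.ne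
      (mem_uIcc.mpr (Or.inl ⟨hab.le, hby⟩))
    have hslope_mul : slope (V i) b a * (y - b) ≤ -δ * (y - b) :=
      mul_le_mul_of_nonneg_right hleft.le (sub_nonneg.mpr hby)
    linarith

lemma integrableOn_pow_mul_exp_sub_mul (j : ℕ) (C : ℝ) {δ : ℝ} (hδ : 0 < δ) :
    IntegrableOn (fun y : ℝ => y ^ j * Real.exp (C - δ * y)) (Ioi 0) := by
  have h := (integrableOn_rpow_mul_exp_neg_mul_rpow (p := 1) (s := j)
    (neg_one_lt_zero.trans_le j.cast_nonneg) one_pos hδ).const_mul (Real.exp C)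
  refine h.congr (Eventually.of_forall fun y => ?_)
  simp only [Real.rpow_natCast, Real.rpow_one, sub_eq_add_neg, Real.exp_add, neg_mul]
  ring

lemma aestronglyMeasurable_pow_mul_exp_of_concaveOn (j : ℕ) {V : ℝ → ℝ}
    (hV : ConcaveOn ℝ (Ioi 0) V) :
    AEStronglyMeasurable (fun y => y ^ j * Real.exp (V y)) (volume.restrict (Ioi 0)) :=
  ((continuousOn_id.pow j).mul (hV.continuousOn isOpen_Ioi).rexp).aestronglyMeasurable
    measurableSet_Ioi

lemma tendsto_integral_pow_mul_exp_of_concaveOn [l.IsCountablyGenerated]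
    (hV : ∀ᶠ i in l, ConcaveOn ℝ (Ioi 0) (V i))
    (hlim : ∀ y, 0 < y → Tendsto (fun i => V i y) l (𝓝 (W y)))
    (hW : Tendsto W atTop atBot) (j : ℕ) :
    Tendsto (fun i => ∫ y in Ioi (0 : ℝ), y ^ j * Real.exp (V i y)) l
      (𝓝 (∫ y in Ioi (0 : ℝ), y ^ j * Real.exp (W y))) := by
  obtain ⟨b, hWb, hb⟩ := ((hW.eventually_lt_atBot (W 1)).and (eventually_gt_atTop 1)).exists
  obtain ⟨C, δ, hδ, hbound⟩ := exists_eventually_le_sub_mul_of_concaveOn hV hlim one_pos hb hWb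
  refine tendsto_integral_filter_of_dominated_convergence _
    (hV.mono fun i hi => aestronglyMeasurable_pow_mul_exp_of_concaveOn j hi) ?_
    (integrableOn_pow_mul_exp_sub_mul j C hδ) ?_
  · filter_upwards [hbound] with i hi
    filter_upwards [ae_restrict_mem measurableSet_Ioi] with y (hy : 0 < y)
    rw [Real.norm_of_nonneg (by positivity)]
    gcongr
    exact hi y hy
  · filter_upwards [ae_restrict_mem measurableSet_Ioi] with y hy
    exact ((Real.continuous_exp.tendsto _).comp (hlim y hy)).const_mul _

lemma integrableOn_pow_mul_exp_of_concaveOn (hV : ConcaveOn ℝ (Ioi 0) W)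
    (hW : Tendsto W atTop atBot) (j : ℕ) :
    IntegrableOn (fun y => y ^ j * Real.exp (W y)) (Ioi 0) := by
  obtain ⟨b, hWb, hb⟩ := ((hW.eventually_lt_atBot (W 1)).and (eventually_gt_atTop 1)).exists
  obtain ⟨C, δ, hδ, hbound⟩ := exists_eventually_le_sub_mul_of_concaveOn (l := pure ())
    (V := fun _ => W) (by simpa using hV) (fun y _ => tendsto_const_nhds) one_pos hb hWb
  have hle : ∀ y, 0 < y → W y ≤ C - δ * y := by simpa using hbound
  refine (integrableOn_pow_mul_exp_sub_mul j C hδ).mono'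
    (aestronglyMeasurable_pow_mul_exp_of_concaveOn j hV) ?_
  filter_upwards [ae_restrict_mem measurableSet_Ioi] with y (hy : 0 < y)
  rw [Real.norm_of_nonneg (by positivity)]
  gcongr
  exact hle y hy

end LogConcave

section SmallArgument

lemma tendsto_rpow_nhdsGT_zero {s : ℝ} (hs : 0 < s) :
    Tendsto (fun x : ℝ => x ^ s) (𝓝[>] 0) (𝓝[>] 0) := by
  refine tendsto_nhdsWithin_iff.mpr ⟨?_, ?_⟩
  · simpa only [Real.zero_rpow hs.ne'] using
      (Real.continuousAt_rpow_const 0 s (Or.inr hs.le)).tendsto.mono_left nhdsWithin_le_nhds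
  · filter_upwards [self_mem_nhdsWithin] with x hx using Real.rpow_pos_of_pos hx s

lemma tendsto_div_rpow_of_iteratedDerivWithin_eq_zero {k : ℕ} {F : ℝ → ℝ}
    (hF : ContDiffOn ℝ k F (Ici 0)) (hF0 : ∀ j < k, iteratedDerivWithin j F (Ici 0) 0 = 0) :
    Tendsto (fun z => F z / z ^ (k : ℝ)) (𝓝[>] 0)
      (𝓝 (iteratedDerivWithin k F (Ici 0) 0 / k.factorial)) := by
  set b := iteratedDerivWithin k F (Ici 0) 0 / k.factorial with hb
  have htaylor : ∀ z, taylorWithinEval F k (Ici 0) 0 z = b * z ^ k := by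
    intro z
    rw [taylor_within_apply, Finset.sum_range_succ, Finset.sum_eq_zero fun j hj => by
      rw [hF0 j (Finset.mem_range.mp hj), smul_zero], hb, sub_zero, smul_eq_mul]
    ring
  have hremainder := ((taylor_tendsto (convex_Ici (0 : ℝ)) self_mem_Ici hF).mono_left
    (nhdsWithin_mono 0 Ioi_subset_Ici_self)).add_const b
  rw [zero_add] at hremainder
  refine hremainder.congr' ?_
  filter_upwards [self_mem_nhdsWithin] with z (hz : 0 < z)
  rw [htaylor, sub_zero, smul_eq_mul, Real.rpow_natCast]
  field_simp
  ring

lemma tendsto_integral_comp_mul_div_rpow {F : ℝ → ℝ} (hF : Measurable F) {κ b y : ℝ} (hκ : -1 < κ)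
    (hFb : Tendsto (fun z => F z / z ^ κ) (𝓝[>] 0) (𝓝 b)) (hy : 0 ≤ y) :
    Tendsto (fun z => ∫ s in (0 : ℝ)..y, F (z * s) / z ^ κ) (𝓝[>] 0)
      (𝓝 (b * (y ^ (κ + 1) / (κ + 1)))) := by
  have hlimit : ∫ s in (0 : ℝ)..y, b * s ^ κ = b * (y ^ (κ + 1) / (κ + 1)) := by
    rw [intervalIntegral.integral_const_mul, integral_rpow (Or.inl hκ),
      Real.zero_rpow (by linarith), sub_zero]
  have hfactor : ∀ z s : ℝ, 0 < z → 0 < s →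
      F (z * s) / z ^ κ = F (z * s) / (z * s) ^ κ * s ^ κ := by
    intro z s hz hs
    rw [Real.mul_rpow hz.le hs.le]
    field_simp
  obtain ⟨δ, hδ, hbound⟩ := mem_nhdsGT_iff_exists_Ioo_subset.mp
    (hFb.abs.eventually_le_const (lt_add_one |b|))
  have hsmall : ∀ᶠ z in 𝓝[>] (0 : ℝ), z * y < δ :=
    (((continuous_mul_const y).tendsto' 0 0 (zero_mul y)).mono_left
      nhdsWithin_le_nhds).eventually_lt_const hδ
  rw [← hlimit]
  refine intervalIntegral.tendsto_integral_filter_of_dominated_convergence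
    (fun s => (|b| + 1) * s ^ κ) ?_ ?_
    ((intervalIntegral.intervalIntegrable_rpow' hκ).const_mul _) ?_
  · exact Eventually.of_forall fun z =>
      ((hF.comp (measurable_const_mul z)).div_const _).aestronglyMeasurable
  · filter_upwards [self_mem_nhdsWithin, hsmall] with z (hz : 0 < z) hzy
    refine Eventually.of_forall fun s hs => ?_
    rw [uIoc_of_le hy] at hs
    rw [hfactor z s hz hs.1, norm_mul, Real.norm_of_nonneg (Real.rpow_nonneg hs.1.le κ)]
    refine mul_le_mul_of_nonneg_right ?_ (Real.rpow_nonneg hs.1.le κ)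
    exact hbound ⟨mul_pos hz hs.1, (mul_le_mul_of_nonneg_left hs.2 hz.le).trans_lt hzy⟩
  · refine Eventually.of_forall fun s hs => ?_
    rw [uIoc_of_le hy] at hs
    have harg : Tendsto (fun z => z * s) (𝓝[>] 0) (𝓝[>] 0) := by
      refine tendsto_nhdsWithin_iff.mpr ⟨((continuous_mul_const s).tendsto' 0 0
        (zero_mul s)).mono_left nhdsWithin_le_nhds, ?_⟩
      filter_upwards [self_mem_nhdsWithin] with z hz using mul_pos hz hs.1
    refine ((hFb.comp harg).mul_const (s ^ κ)).congr' ?_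
    filter_upwards [self_mem_nhdsWithin] with z hz using (hfactor z s hz hs.1).symm

lemma tendsto_mul_sub_mul_rpow_atBot (p : ℝ) {q κ : ℝ} (hq : 0 < q) (hκ : 0 < κ) :
    Tendsto (fun x : ℝ => p * x - q * x ^ (κ + 1)) atTop atBot := by
  have hslope : Tendsto (fun x : ℝ => p - q * x ^ κ) atTop atBot :=
    tendsto_atBot_add_const_left _ p
      (tendsto_neg_atTop_atBot.comp ((tendsto_rpow_atTop hκ).const_mul_atTop hq))
  refine (tendsto_id.atTop_mul_atBot₀ hslope).congr' ?_
  filter_upwards [eventually_gt_atTop 0] with x hx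
  rw [Real.rpow_add_one hx.ne', id]
  ring

end SmallArgument

section Workload

/-- The mean of the probability density proportional to `exp V` on `(0, ∞)`; the limiting
virtual waiting times are of this form. It is the junk value `0` if `exp V` is not integrable. -/
noncomputable def gibbsMean (V : ℝ → ℝ) : ℝ :=
  (∫ x in Ioi (0 : ℝ), x * Real.exp (V x)) / ∫ x in Ioi (0 : ℝ), Real.exp (V x)

/-- The logarithm of the stationary workload density on `(0, ∞)` of the `M/M/1+GI` queue with
arrival rate `lam`, service rate `μ` and patience CDF `G`, in the normalization where the workload
has an atom of mass `1` at `0` and density `lam * exp (workloadLogDensity lam μ G x)`. -/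
noncomputable def workloadLogDensity (lam μ : ℝ) (G : ℝ → ℝ) (x : ℝ) : ℝ :=
  lam * (∫ u in (0 : ℝ)..x, (1 - G u)) - μ * x

/-- The mean stationary virtual waiting time of the `M/M/1+GI` queue with arrival rate `lam`,
service rate `μ` and patience CDF `G`, of which `Emean` is the case `lam = (1 + c * α ^ γ) * μ`,
`G x = F (α * x)`. -/
noncomputable def meanVirtualWait (lam μ : ℝ) (G : ℝ → ℝ) : ℝ :=
  lam * (∫ x in Ioi (0 : ℝ), x * Real.exp (workloadLogDensity lam μ G x)) /
    (1 + lam * ∫ x in Ioi (0 : ℝ), Real.exp (workloadLogDensity lam μ G x))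

lemma workloadLogDensity_div {lam μ r y : ℝ} {G : ℝ → ℝ} (hr : r ≠ 0)
    (hG : IntervalIntegrable G volume 0 (y / r)) :
    workloadLogDensity lam μ G (y / r) =
      (lam - μ) / r * y - lam * ∫ s in (0 : ℝ)..y, G (s / r) / r := by
  rw [workloadLogDensity, intervalIntegral.integral_sub _root_.intervalIntegrable_const hG,
    intervalIntegral.integral_div, intervalIntegral.integral_comp_div _ hr]
  simp only [intervalIntegral.integral_const, zero_div, sub_zero, smul_eq_mul, mul_one]
  field_simp
  ring

lemma concaveOn_workloadLogDensity_div {lam : ℝ} (hlam : 0 ≤ lam) (μ r : ℝ) {G : ℝ → ℝ}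
    (hG : Monotone G) : ConcaveOn ℝ univ fun y => workloadLogDensity lam μ G (y / r) := by
  have hprimitive : ConcaveOn ℝ univ fun x => lam * ∫ u in (0 : ℝ)..x, (1 - G u) :=
    (concaveOn_integral_of_antitone (fun _ _ huv => sub_le_sub_left (hG huv) 1) 0).smul hlam
  have hdrift : ConvexOn ℝ univ fun x => μ * x := (LinearMap.mulLeft ℝ μ).convexOn convex_univ
  exact (hprimitive.sub hdrift).comp_linearMap (LinearMap.mulRight ℝ r⁻¹)

lemma mul_meanVirtualWait (lam μ : ℝ) (G : ℝ → ℝ) {r : ℝ} (hr : 0 < r) :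
    r * meanVirtualWait lam μ G =
      lam * (∫ y in Ioi (0 : ℝ), y * Real.exp (workloadLogDensity lam μ G (y / r))) /
        (r + lam * ∫ y in Ioi (0 : ℝ), Real.exp (workloadLogDensity lam μ G (y / r))) := by
  have hscale : ∀ g : ℝ → ℝ, ∫ y in Ioi (0 : ℝ), g (y / r) = r * ∫ x in Ioi (0 : ℝ), g x := by
    intro g
    simpa [div_eq_inv_mul] using integral_comp_mul_left_Ioi g 0 (inv_pos.mpr hr)
  have hmean : ∫ y in Ioi (0 : ℝ), y * Real.exp (workloadLogDensity lam μ G (y / r)) =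
      r * (r * ∫ x in Ioi (0 : ℝ), x * Real.exp (workloadLogDensity lam μ G x)) := by
    rw [← hscale fun x => x * Real.exp (workloadLogDensity lam μ G x), ← integral_const_mul]
    congr 1 with y
    field_simp
  rw [meanVirtualWait, hmean, hscale fun x => Real.exp (workloadLogDensity lam μ G x),
    ← mul_div_assoc, ← mul_div_mul_left (r * _) _ hr.ne']
  congr 1 <;> ring

lemma tendsto_mul_meanVirtualWait {ι : Type*} {l : Filter ι} [l.IsCountablyGenerated] [l.NeBot]
    {lam r : ι → ℝ} {G : ι → ℝ → ℝ} {μ : ℝ} {W : ℝ → ℝ} (hμ : 0 < μ)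
    (hG : ∀ᶠ i in l, Monotone (G i)) (hlam : Tendsto lam l (𝓝 μ)) (hr : Tendsto r l (𝓝[>] 0))
    (hlim : ∀ y, 0 < y →
      Tendsto (fun i => workloadLogDensity (lam i) μ (G i) (y / r i)) l (𝓝 (W y)))
    (hW : Tendsto W atTop atBot) :
    Tendsto (fun i => r i * meanVirtualWait (lam i) μ (G i)) l (𝓝 (gibbsMean W)) := by
  have hconcave : ∀ᶠ i in l,
      ConcaveOn ℝ (Ioi 0) fun y => workloadLogDensity (lam i) μ (G i) (y / r i) := by
    filter_upwards [hG, hlam.eventually_const_lt hμ] with i hGi hlami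
    exact (concaveOn_workloadLogDensity_div hlami.le μ (r i) hGi).subset (subset_univ _)
      (convex_Ioi 0)
  have hmass := tendsto_integral_pow_mul_exp_of_concaveOn hconcave hlim hW 0
  have hmean := tendsto_integral_pow_mul_exp_of_concaveOn hconcave hlim hW 1
  simp only [pow_zero, one_mul] at hmass
  simp only [pow_one] at hmean
  have hpos : 0 < ∫ y in Ioi (0 : ℝ), Real.exp (W y) := by
    have : NeZero ((volume : Measure ℝ).restrict (Ioi 0)) := ⟨by simp⟩
    have hint :=
      integrableOn_pow_mul_exp_of_concaveOn (concaveOn_of_tendsto hconcave hlim) hW 0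
    simp only [pow_zero, one_mul] at hint
    exact integral_exp_pos hint
  obtain ⟨hr0, hrpos⟩ := tendsto_nhdsWithin_iff.mp hr
  have hquot := (hlam.mul hmean).div (hr0.add (hlam.mul hmass)) (by positivity)
  rw [zero_add, mul_div_mul_left _ _ hμ.ne'] at hquot
  refine hquot.congr' ?_
  filter_upwards [hrpos] with i hri using (mul_meanVirtualWait (lam i) μ (G i) hri).symm

end Workload

section HeavyTraffic

lemma tendsto_of_tendsto_sub_div_rpow {f : ℝ → ℝ} {a β h : ℝ} (hh : 0 < h)
    (hf : Tendsto (fun α => (f α - a) / α ^ h) (𝓝[>] 0) (𝓝 β)) :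
    Tendsto f (𝓝[>] 0) (𝓝 a) := by
  have hmul := (hf.mul (tendsto_nhdsWithin_iff.mp (tendsto_rpow_nhdsGT_zero hh)).1).add_const a
  rw [mul_zero, zero_add] at hmul
  refine hmul.congr' ?_
  filter_upwards [self_mem_nhdsWithin] with α (hα : 0 < α)
  rw [div_mul_cancel₀ _ (Real.rpow_pos_of_pos hα h).ne', sub_add_cancel]

variable {κ b μ β : ℝ} {F lam : ℝ → ℝ}

lemma tendsto_workloadLogDensity_div_rpow (hκ : 0 < κ) (hF : Monotone F)
    (hFb : Tendsto (fun z => F z / z ^ κ) (𝓝[>] 0) (𝓝 b))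
    (hlam : Tendsto (fun α => (lam α - μ) / α ^ (κ / (κ + 1))) (𝓝[>] 0) (𝓝 β)) {y : ℝ}
    (hy : 0 ≤ y) :
    Tendsto (fun α => workloadLogDensity (lam α) μ (fun x => F (α * x)) (y / α ^ (κ / (κ + 1))))
      (𝓝[>] 0) (𝓝 (β * y - μ * b / (κ + 1) * y ^ (κ + 1))) := by
  have hpatience := (tendsto_integral_comp_mul_div_rpow hF.measurable (by linarith) hFb hy).comp
    (tendsto_rpow_nhdsGT_zero (s := 1 / (κ + 1)) (by positivity))
  have hlimit := (hlam.mul_const y).sub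
    ((tendsto_of_tendsto_sub_div_rpow (by positivity) hlam).mul hpatience)
  rw [show μ * b / (κ + 1) * y ^ (κ + 1) = μ * (b * (y ^ (κ + 1) / (κ + 1))) by ring]
  refine hlimit.congr' ?_
  filter_upwards [self_mem_nhdsWithin] with α (hα : 0 < α)
  have hscale : (α ^ (1 / (κ + 1))) ^ κ = α ^ (κ / (κ + 1)) := by
    rw [← Real.rpow_mul hα.le, one_div_mul_eq_div]
  have hsplit : ∀ s, α * (s / α ^ (κ / (κ + 1))) = α ^ (1 / (κ + 1)) * s := by
    intro s
    have hprod : α ^ (1 / (κ + 1)) * α ^ (κ / (κ + 1)) = α := by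
      rw [← Real.rpow_add hα, ← add_div, add_comm, div_self (by positivity), Real.rpow_one]
    rw [← mul_div_assoc, div_eq_iff (Real.rpow_pos_of_pos hα _).ne', mul_right_comm, hprod]
  have hmono : Monotone fun x => F (α * x) := hF.comp (monotone_mul_left_of_nonneg hα.le)
  rw [workloadLogDensity_div (Real.rpow_pos_of_pos hα _).ne' hmono.intervalIntegrable]
  simp only [Function.comp_apply, hscale, hsplit]

theorem mm1gi_heavy_traffic_critical_general (hκ : 0 < κ) (hb : 0 < b) (hμ : 0 < μ)
    (hF : Monotone F) (hFb : Tendsto (fun z => F z / z ^ κ) (𝓝[>] 0) (𝓝 b))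
    (hlam : Tendsto (fun α => (lam α - μ) / α ^ (κ / (κ + 1))) (𝓝[>] 0) (𝓝 β)) :
    Tendsto (fun α => α ^ (κ / (κ + 1)) * meanVirtualWait (lam α) μ fun x => F (α * x)) (𝓝[>] 0)
      (𝓝 (gibbsMean fun x => β * x - μ * b / (κ + 1) * x ^ (κ + 1))) := by
  have hh : 0 < κ / (κ + 1) := by positivity
  refine tendsto_mul_meanVirtualWait hμ ?_ (tendsto_of_tendsto_sub_div_rpow hh hlam)
    (tendsto_rpow_nhdsGT_zero hh)
    (fun y hy => tendsto_workloadLogDensity_div_rpow hκ hF hFb hlam hy.le)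
    (tendsto_mul_sub_mul_rpow_atBot β (by positivity) hκ)
  filter_upwards [self_mem_nhdsWithin] with α (hα : 0 < α)
  exact hF.comp (monotone_mul_left_of_nonneg hα.le)

lemma tendsto_criticalLoad_sub_div_rpow (μ c : ℝ) {γ h : ℝ} (hγ : h ≤ γ) :
    Tendsto (fun α : ℝ => ((1 + c * α ^ γ) * μ - μ) / α ^ h) (𝓝[>] 0)
      (𝓝 (c * μ * if γ = h then 1 else 0)) := by
  have hpow : Tendsto (fun α : ℝ => α ^ (γ - h)) (𝓝[>] 0) (𝓝 (if γ = h then 1 else 0)) := by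
    split_ifs with heq
    · simp [heq]
    · exact (tendsto_nhdsWithin_iff.mp
        (tendsto_rpow_nhdsGT_zero (sub_pos.mpr (lt_of_le_of_ne hγ (Ne.symm heq))))).1
  refine (hpow.const_mul (c * μ)).congr' ?_
  filter_upwards [self_mem_nhdsWithin] with α (hα : 0 < α)
  rw [Real.rpow_sub hα]
  ring

lemma Emean_eq_meanVirtualWait (F : ℝ → ℝ) (μ c γ α : ℝ) :
    Emean F μ c γ α = meanVirtualWait ((1 + c * α ^ γ) * μ) μ fun x => F (α * x) :=
  rfl

lemma criticalExponent_eq (p a μ D x : ℝ) (k : ℕ) :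
    p * x * a - μ * D * x ^ (k + 1) / (k + 1).factorial =
      p * a * x - μ * (D / k.factorial) / (k + 1) * x ^ ((k : ℝ) + 1) := by
  rw [← Nat.cast_add_one, Real.rpow_natCast, Nat.factorial_succ]
  push_cast
  field_simp

end HeavyTraffic

/-- critically loaded heavy-traffic limit for the exact `M/M/1+GI` mean
virtual waiting time: if `γ ≥ h = k/(k+1)` then `α^h E(α) → ψ`, where
`ψ = ∫_0^∞ x exp{c μ x 𝟙{γ=h} - μ F^{(k)}(0) x^{k+1}/(k+1)!} dx
   / ∫_0^∞ exp{c μ x 𝟙{γ=h} - μ F^{(k)}(0) x^{k+1}/(k+1)!} dx`. -/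
theorem mm1gi_heavy_traffic_critical
    (k : ℕ) (hk : 1 ≤ k)
    (F : ℝ → ℝ)
    (hF_mono : Monotone F)
    (hF_zero : ∀ x ≤ (0 : ℝ), F x = 0)
    (hF_range : ∀ x, 0 ≤ x → 0 ≤ F x ∧ F x < 1)
    (hF_lim : Tendsto F atTop (𝓝 1))
    (hF_smooth : ContDiffOn ℝ k F (Set.Ici 0))
    (hF_derivs : ∀ j < k, iteratedDerivWithin j F (Set.Ici 0) 0 = 0)
    (hF_k : 0 < iteratedDerivWithin k F (Set.Ici 0) 0)
    (μ γ c : ℝ) (hμ : 0 < μ) (hγ : 0 < γ)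
    (hγh : (k : ℝ) / (k + 1) ≤ γ)
    (hJ : ∀ᶠ α in 𝓝[>] (0 : ℝ), IntegrableOn
      (fun x : ℝ => Real.exp ((1 + c * α ^ γ) * μ *
        (∫ u in (0 : ℝ)..x, (1 - F (α * u))) - μ * x)) (Set.Ioi 0))
    (hJ1 : ∀ᶠ α in 𝓝[>] (0 : ℝ), IntegrableOn
      (fun x : ℝ => x * Real.exp ((1 + c * α ^ γ) * μ *
        (∫ u in (0 : ℝ)..x, (1 - F (α * u))) - μ * x)) (Set.Ioi 0)) :
    Tendsto (fun α : ℝ => α ^ ((k : ℝ) / (k + 1)) * Emean F μ c γ α)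
      (𝓝[>] (0 : ℝ))
      (𝓝 ((∫ x in Set.Ioi (0 : ℝ), x * Real.exp
            (c * μ * x * (if γ = (k : ℝ) / (k + 1) then (1 : ℝ) else 0)
              - μ * iteratedDerivWithin k F (Set.Ici 0) 0 * x ^ (k + 1)
                / (Nat.factorial (k + 1))))
        / (∫ x in Set.Ioi (0 : ℝ), Real.exp
            (c * μ * x * (if γ = (k : ℝ) / (k + 1) then (1 : ℝ) else 0)
              - μ * iteratedDerivWithin k F (Set.Ici 0) 0 * x ^ (k + 1)
                / (Nat.factorial (k + 1)))))) := by
  simpa only [Emean_eq_meanVirtualWait, gibbsMean, criticalExponent_eq] using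
    mm1gi_heavy_traffic_critical_general (Nat.cast_pos.mpr hk) (by positivity) hμ hF_mono
      (tendsto_div_rpow_of_iteratedDerivWithin_eq_zero hF_smooth hF_derivs)
      (tendsto_criticalLoad_sub_div_rpow μ c hγh)
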